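/- Let H be an induced subgraph of a graph G with mr(F₂,H) = k, and suppose that MR(F₂,H) contains exactly one matrix. If G ∈ F_{k+1}(F₂,H), then |V(G)| − |V(H)| ≤ 2. -/

import Mathlib

/-!
If a principal submatrix `M = A[e, e]` of a symmetric matrix `A` has the full rank of `A`, then `A`
is recovered from its rows `A[e, :]`: the equation `M Y = A[e, :]` is solvable, and every solution
satisfies `A = Yᵀ M Y`.

Let `M` be the unique matrix in `MR(F₂, H)`. For `v ∉ W`, a minimum rank matrix `A_v` of `G - v` has
rank at most `k = mr(F₂, H)`, so its principal submatrix on `W` is `M`, of the same rank. Over `F₂`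
the off-diagonal entries of `A_v` are dictated by `G`, so the rows of `A_v` indexed by `W` agree
with those of any fixed `B ∈ S(F₂, G)` that has the diagonal of `M` on `W`. As soon as there are two
such `v`, solving for one column at a time gives `Y` with `M Y = B[W, :]`, and `Yᵀ M Y` restricts to
`A_v` on `G - v` for every `v ∉ W`. With three such `v`, any pair of vertices survives in some
`G - v`, so `Yᵀ M Y` is a matrix for `G` of rank at most `k`, contradicting `mr(F₂, G) ≥ k + 1`.
-/

open Matrix

/-- `A` is a symmetric matrix over `F` whose off-diagonal nonzero pattern is
given by the graph `G` (diagonal entries are unconstrained). -/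
def IsGraphMatrix (F : Type*) [Field F] {V : Type*} (G : SimpleGraph V)
    (A : Matrix V V F) : Prop :=
  A.IsSymm ∧ ∀ i j : V, i ≠ j → (A i j ≠ 0 ↔ G.Adj i j)

/-- The minimum rank `mr(F, G)` of the graph `G` over the field `F`. -/
noncomputable def minRank (F : Type*) [Field F] {V : Type*} [Fintype V]
    (G : SimpleGraph V) : ℕ :=
  sInf {r : ℕ | ∃ A : Matrix V V F, IsGraphMatrix F G A ∧ A.rank = r}

/-- The graph `G - v` obtained from `G` by deleting the vertex `v`. -/
def deleteVert {V : Type*} (G : SimpleGraph V) (v : V) : SimpleGraph {u : V // u ≠ v} :=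
  SimpleGraph.comap Subtype.val G

/-- The induced subgraph of `G` on a finite set `W` of vertices. -/
def inducedSub {V : Type*} (G : SimpleGraph V) (W : Finset V) :
    SimpleGraph {x : V // x ∈ W} :=
  SimpleGraph.comap Subtype.val G

/-- `MR(F, G)`: the set of matrices in `S(F, G)` attaining the minimum rank of `G`. -/
noncomputable def MRSet (F : Type*) [Field F] {V : Type*} [Fintype V] (G : SimpleGraph V) :
    Set (Matrix V V F) :=
  {A | IsGraphMatrix F G A ∧ A.rank = minRank F G}

section RankPrincipalSubmatrix

variable {F l m n p : Type*} [Field F] [Fintype m]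

lemma exists_submatrix_mul_eq_of_rank_le [Fintype n] (A : Matrix l n F) (r : p → l) (c : m → n)
    (h : A.rank ≤ (A.submatrix r c).rank) : ∃ Z : Matrix m n F, A.submatrix id c * Z = A := by
  classical
  have hle : LinearMap.range (A.submatrix id c).mulVecLin ≤ LinearMap.range A.mulVecLin := by
    rw [range_mulVecLin, range_mulVecLin]
    apply Submodule.span_mono
    rintro _ ⟨w, rfl⟩
    exact ⟨c w, rfl⟩
  have hrank : A.rank ≤ (A.submatrix id c).rank :=
    h.trans (rank_submatrix_le (A.submatrix id c) r id)
  have heq := Submodule.eq_of_le_of_finrank_le hle hrank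
  have hcol (j : n) : ∃ z : m → F, A.submatrix id c *ᵥ z = A.col j := by
    have hj : A.col j ∈ LinearMap.range A.mulVecLin := ⟨Pi.single j 1, by simp⟩
    rwa [← heq] at hj
  choose z hz using hcol
  exact ⟨(of z)ᵀ, ext fun i j => congrFun (hz j) i⟩

lemma exists_submatrix_mul_eq_submatrix_of_rank_le [Fintype n] {A : Matrix l n F} {r : p → l}
    {c : m → n} (h : A.rank ≤ (A.submatrix r c).rank) :
    ∃ Z : Matrix m n F, A.submatrix r c * Z = A.submatrix r id := by
  obtain ⟨Z, hZ⟩ := exists_submatrix_mul_eq_of_rank_le A r c h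
  exact ⟨Z, congrArg (submatrix · r id) hZ⟩

lemma transpose_mul_submatrix_mul_eq_of_rank_le [Fintype n] {A : Matrix n n F} {e : m → n}
    (hA : A.IsSymm) (h : A.rank ≤ (A.submatrix e e).rank)
    {Y : Matrix m n F} (hY : A.submatrix e e * Y = A.submatrix e id) :
    Yᵀ * A.submatrix e e * Y = A := by
  obtain ⟨Z, hZ⟩ := exists_submatrix_mul_eq_of_rank_le A e e h
  have hrows : A.submatrix e e * Z = A.submatrix e id := congrArg (submatrix · e id) hZ
  have hcols : Yᵀ * A.submatrix e e = A.submatrix id e := by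
    simpa only [transpose_mul, transpose_submatrix, hA.eq] using congrArg transpose hY
  calc Yᵀ * A.submatrix e e * Y = Yᵀ * (A.submatrix e e * Z) := by
        rw [Matrix.mul_assoc, hY, hrows]
    _ = A := by rw [← Matrix.mul_assoc, hcols, hZ]

end RankPrincipalSubmatrix

section VertexDeletion

variable {V : Type*} {S : Finset V}

lemma exists_mul_eq_of_forall_submatrix_ne {R l m : Type*} [NonUnitalNonAssocSemiring R]
    [Fintype m] (hS : 1 < S.card) {M : Matrix l m R} {B : Matrix l V R}
    (h : ∀ v ∈ S, ∃ Z : Matrix m {u // u ≠ v} R, M * Z = B.submatrix id Subtype.val) :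
    ∃ Y : Matrix m V R, M * Y = B := by
  have hcol (u : V) : ∃ y : m → R, M *ᵥ y = B.col u := by
    obtain ⟨v, hv, hvu⟩ := S.exists_mem_ne hS u
    obtain ⟨Z, hZ⟩ := h v hv
    exact ⟨Z.col ⟨u, hvu.symm⟩, funext fun i => congrFun₂ hZ i ⟨u, hvu.symm⟩⟩
  choose y hy using hcol
  exact ⟨(of y)ᵀ, ext fun i u => congrFun (hy u) i⟩

lemma isGraphMatrix_of_forall_deleteVert {F : Type*} [Field F] {G : SimpleGraph V}
    (hS : 2 < S.card) {A : Matrix V V F}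
    (h : ∀ v ∈ S, IsGraphMatrix F (deleteVert G v) (A.submatrix Subtype.val Subtype.val)) :
    IsGraphMatrix F G A := by
  classical
  have havoid (i j : V) : ∃ v ∈ S, i ≠ v ∧ j ≠ v := by
    obtain ⟨v, hv, hvij⟩ := Finset.exists_mem_notMem_of_card_lt_card
      ((Finset.card_le_two (a := i) (b := j)).trans_lt hS)
    simp only [Finset.mem_insert, Finset.mem_singleton, not_or] at hvij
    exact ⟨v, hv, Ne.symm hvij.1, Ne.symm hvij.2⟩
  refine ⟨IsSymm.ext fun i j => ?_, fun i j hij => ?_⟩ <;>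
    obtain ⟨v, hv, hi, hj⟩ := havoid i j
  · exact (h v hv).1.apply ⟨i, hi⟩ ⟨j, hj⟩
  · exact (h v hv).2 ⟨i, hi⟩ ⟨j, hj⟩ (by simpa using hij)

end VertexDeletion

section MinRank

variable {F m V : Type*} [Field F] {G : SimpleGraph V} {A : Matrix V V F} {e : m → V}

lemma IsGraphMatrix.submatrix (hA : IsGraphMatrix F G A) (he : e.Injective) :
    IsGraphMatrix F (G.comap e) (A.submatrix e e) :=
  ⟨hA.1.submatrix e, fun i j hij => hA.2 (e i) (e j) (he.ne hij)⟩

lemma exists_isGraphMatrix_apply_self_eq (G : SimpleGraph V) (he : e.Injective) (d : m → F) :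
    ∃ A : Matrix V V F, IsGraphMatrix F G A ∧ ∀ w, A (e w) (e w) = d w := by
  classical
  refine ⟨G.adjMatrix F + diagonal (Function.extend e d 0), ⟨?_, fun i j hij => ?_⟩, fun w => ?_⟩
  · exact G.isSymm_adjMatrix.add (isSymm_diagonal _)
  · simp [SimpleGraph.adjMatrix_apply, hij]
  · simp [he.extend_apply]

variable [Fintype V]

lemma MRSet_nonempty (F : Type*) [Field F] (G : SimpleGraph V) : (MRSet F G).Nonempty := by
  obtain ⟨A, hA, -⟩ := exists_isGraphMatrix_apply_self_eq G Function.injective_id (0 : V → F)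
  exact Nat.sInf_mem (s := {r | ∃ A : Matrix V V F, IsGraphMatrix F G A ∧ A.rank = r})
    ⟨A.rank, A, hA, rfl⟩

lemma IsGraphMatrix.minRank_le_rank (hA : IsGraphMatrix F G A) : minRank F G ≤ A.rank :=
  Nat.sInf_le ⟨A, hA, rfl⟩

lemma IsGraphMatrix.submatrix_mem_MRSet [Fintype m] (hA : IsGraphMatrix F G A)
    (he : e.Injective) (h : A.rank ≤ minRank F (G.comap e)) :
    A.submatrix e e ∈ MRSet F (G.comap e) :=
  ⟨hA.submatrix he, ((rank_submatrix_le A e e).trans h).antisymm (hA.submatrix he).minRank_le_rank⟩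

end MinRank

section ZModTwo

variable {m V : Type*} {G : SimpleGraph V} {A B : Matrix V V (ZMod 2)} {e : m → V}

lemma IsGraphMatrix.apply_eq_of_ne (hA : IsGraphMatrix (ZMod 2) G A)
    (hB : IsGraphMatrix (ZMod 2) G B) {i j : V} (hij : i ≠ j) : A i j = B i j := by
  have eq_of_ne_zero_iff : ∀ x y : ZMod 2, (x ≠ 0 ↔ y ≠ 0) → x = y := by decide
  exact eq_of_ne_zero_iff _ _ ((hA.2 i j hij).trans (hB.2 i j hij).symm)

lemma IsGraphMatrix.submatrix_id_eq (hA : IsGraphMatrix (ZMod 2) G A)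
    (hB : IsGraphMatrix (ZMod 2) G B) (hdiag : ∀ w, A (e w) (e w) = B (e w) (e w)) :
    A.submatrix e id = B.submatrix e id := by
  ext w j
  obtain rfl | hne := eq_or_ne (e w) j
  · exact hdiag w
  · exact hA.apply_eq_of_ne hB hne

lemma exists_mul_eq_and_isGraphMatrix_of_MRSet_eq_singleton [Fintype m] [Fintype V]
    {M : Matrix m m (ZMod 2)} (he : e.Injective)
    (hM : MRSet (ZMod 2) (G.comap e) = {M})
    (hrank : minRank (ZMod 2) G ≤ minRank (ZMod 2) (G.comap e))
    (hB : IsGraphMatrix (ZMod 2) G B) (hdiag : ∀ w, B (e w) (e w) = M w w) :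
    (∃ Z : Matrix m V (ZMod 2), M * Z = B.submatrix e id) ∧
      ∀ Y : Matrix m V (ZMod 2), M * Y = B.submatrix e id →
        IsGraphMatrix (ZMod 2) G (Yᵀ * M * Y) := by
  obtain ⟨A, hA, hArank⟩ := MRSet_nonempty (ZMod 2) G
  have hmem := hA.submatrix_mem_MRSet he (hArank.trans_le hrank)
  have hAM : A.submatrix e e = M := by rwa [hM] at hmem
  have hAB : A.submatrix e id = B.submatrix e id :=
    hA.submatrix_id_eq hB fun w => (congrFun₂ hAM w w).trans (hdiag w).symm
  have hle : A.rank ≤ (A.submatrix e e).rank :=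
    (hArank.trans_le hrank).trans hmem.2.ge
  subst hAM
  rw [← hAB]
  refine ⟨exists_submatrix_mul_eq_submatrix_of_rank_le hle, fun Y hY => ?_⟩
  rwa [transpose_mul_submatrix_mul_eq_of_rank_le hA.1 hle hY]

lemma exists_mul_eq_and_isGraphMatrix_deleteVert [Fintype V] [DecidableEq V]
    {W : Finset V} {M : Matrix W W (ZMod 2)} {v : V} (hv : v ∉ W)
    (hM : MRSet (ZMod 2) (inducedSub G W) = {M})
    (hrank : minRank (ZMod 2) (deleteVert G v) ≤ minRank (ZMod 2) (inducedSub G W))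
    (hB : IsGraphMatrix (ZMod 2) G B) (hdiag : ∀ w : W, B w w = M w w) :
    (∃ Z : Matrix W {u // u ≠ v} (ZMod 2), M * Z = B.submatrix Subtype.val Subtype.val) ∧
      ∀ Y : Matrix W V (ZMod 2), M * Y = B.submatrix Subtype.val id →
        IsGraphMatrix (ZMod 2) (deleteVert G v)
          ((Yᵀ * M * Y).submatrix Subtype.val Subtype.val) := by
  let e : W → {u // u ≠ v} := Subtype.map id fun w hw => ne_of_mem_of_not_mem hw hv
  have he : e.Injective := Subtype.map_injective _ Function.injective_id
  have hBv : IsGraphMatrix (ZMod 2) (deleteVert G v) (B.submatrix Subtype.val Subtype.val) :=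
    hB.submatrix Subtype.val_injective
  obtain ⟨hZ, hglue⟩ :=
    exists_mul_eq_and_isGraphMatrix_of_MRSet_eq_singleton (e := e) (G := deleteVert G v)
      he hM hrank hBv hdiag
  exact ⟨hZ, fun Y hY =>
    hglue (Y.submatrix id Subtype.val) (congrArg (submatrix · id Subtype.val) hY)⟩

end ZModTwo

/-- Let `H = G[W]` be an induced subgraph of `G` with `mr(F₂, H) = k`, and suppose that
`MR(F₂, H)` contains exactly one matrix.  If `G ∈ F_{k+1}(F₂, H)` (witnessed by this copy
of `H`), then `|V(G)| - |V(H)| ≤ 2`. -/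
theorem card_le_two_of_unique_MR {V : Type*} [Fintype V] [DecidableEq V]
    (G : SimpleGraph V) (W : Finset V) (k : ℕ)
    (hH : minRank (ZMod 2) (inducedSub G W) = k)
    (hMR : ∃! M, M ∈ MRSet (ZMod 2) (inducedSub G W))
    (hG : k + 1 ≤ minRank (ZMod 2) G)
    (hdel : ∀ v : V, v ∉ W → minRank (ZMod 2) (deleteVert G v) ≤ k) :
    Wᶜ.card ≤ 2 := by
  by_contra! hcard
  obtain ⟨M, hM⟩ := Set.singleton_iff_unique_mem.2 hMR
  obtain ⟨-, hMrank⟩ : M ∈ MRSet (ZMod 2) (inducedSub G W) := hM ▸ Set.mem_singleton M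
  obtain ⟨B, hB, hBM⟩ := exists_isGraphMatrix_apply_self_eq G Subtype.val_injective M.diag
  have hdelete (v : V) (hv : v ∈ Wᶜ) :=
    have hv := Finset.mem_compl.1 hv
    exists_mul_eq_and_isGraphMatrix_deleteVert hv hM ((hdel v hv).trans hH.ge) hB hBM
  obtain ⟨Y, hY⟩ : ∃ Y, M * Y = B.submatrix Subtype.val id :=
    exists_mul_eq_of_forall_submatrix_ne (by lia) fun v hv => (hdelete v hv).1
  have hYG : IsGraphMatrix (ZMod 2) G (Yᵀ * M * Y) :=
    isGraphMatrix_of_forall_deleteVert hcard fun v hv => (hdelete v hv).2 Y hY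
  have hYrank := calc minRank (ZMod 2) G ≤ (Yᵀ * M * Y).rank := hYG.minRank_le_rank
    _ ≤ (Yᵀ * M).rank := rank_mul_le_left _ _
    _ ≤ M.rank := rank_mul_le_right _ _
  lia
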